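/- Let L > 0, T > 0, S ∈ [0,T]. Let (η, v) be a pair of real-valued functions on [0,T] × [0,L] with continuous partial derivatives ∂_t η, ∂_t v, ∂_x^j η, ∂_x^j v for j ≤ 3, satisfying η_t + v_x + v_{xxx} = 0 and v_t + η_x + η_{xxx} = 0 on [0,T] × [0,L], and let h₀, h₁, h₂, g₀, g₁, g₂ : [0,T] → ℝ be its boundary traces: η(t,0) = h₀(t), η(t,L) = h₁(t), η_x(t,0) = h₂(t), v(t,0) = g₀(t), v(t,L) = g₁(t), v_x(t,L) = g₂(t). Let (θ, u) be a classical solution of the homogeneous linearized KdV–KdV system on [0,T] × [0,L]. Then ∫₀^L [η(S,x)·θ(S,x) + v(S,x)·u(S,x)] dx − ∫₀^L [η(0,x)·θ(0,x) + v(0,x)·u(0,x)] dx = ∫₀^S [θ_x(t,L)·g₂(t) − θ_{xx}(t,L)·g₁(t) + θ_{xx}(t,0)·g₀(t) − u_x(t,0)·h₂(t) − u_{xx}(t,L)·h₁(t) + u_{xx}(t,0)·h₀(t)] dt. -/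

import Mathlib

open Set MeasureTheory

/-- Partial derivative in the first (time) variable. -/
noncomputable def pt (f : ℝ → ℝ → ℝ) : ℝ → ℝ → ℝ := fun t x => deriv (fun s => f s x) t

/-- Partial derivative in the second (space) variable. -/
noncomputable def px (f : ℝ → ℝ → ℝ) : ℝ → ℝ → ℝ := fun t x => deriv (fun y => f t y) x

/-- `(η, v)` is a regular solution of the linearized KdV–KdV system on `[0,T] × [0,L]`:
the time derivatives and spatial derivatives up to order `3` exist and are continuous on
`[0,T] × [0,L]`, and the equations `η_t + v_x + v_{xxx} = 0`, `v_t + η_x + η_{xxx} = 0` hold.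
(No boundary condition is imposed.) -/
def IsRegularSolution (L T : ℝ) (η v : ℝ → ℝ → ℝ) : Prop :=
  (∀ x, Differentiable ℝ fun t => η t x) ∧
  (∀ x, Differentiable ℝ fun t => v t x) ∧
  (∀ t, ContDiff ℝ 3 (η t)) ∧
  (∀ t, ContDiff ℝ 3 (v t)) ∧
  ContinuousOn (fun q : ℝ × ℝ => η q.1 q.2) (Icc 0 T ×ˢ Icc 0 L) ∧
  ContinuousOn (fun q : ℝ × ℝ => v q.1 q.2) (Icc 0 T ×ˢ Icc 0 L) ∧
  ContinuousOn (fun q : ℝ × ℝ => pt η q.1 q.2) (Icc 0 T ×ˢ Icc 0 L) ∧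
  ContinuousOn (fun q : ℝ × ℝ => pt v q.1 q.2) (Icc 0 T ×ˢ Icc 0 L) ∧
  ContinuousOn (fun q : ℝ × ℝ => px η q.1 q.2) (Icc 0 T ×ˢ Icc 0 L) ∧
  ContinuousOn (fun q : ℝ × ℝ => px v q.1 q.2) (Icc 0 T ×ˢ Icc 0 L) ∧
  ContinuousOn (fun q : ℝ × ℝ => px (px η) q.1 q.2) (Icc 0 T ×ˢ Icc 0 L) ∧
  ContinuousOn (fun q : ℝ × ℝ => px (px v) q.1 q.2) (Icc 0 T ×ˢ Icc 0 L) ∧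
  ContinuousOn (fun q : ℝ × ℝ => px (px (px η)) q.1 q.2) (Icc 0 T ×ˢ Icc 0 L) ∧
  ContinuousOn (fun q : ℝ × ℝ => px (px (px v)) q.1 q.2) (Icc 0 T ×ˢ Icc 0 L) ∧
  (∀ t ∈ Icc (0 : ℝ) T, ∀ x ∈ Icc (0 : ℝ) L,
    pt η t x + px v t x + px (px (px v)) t x = 0) ∧
  (∀ t ∈ Icc (0 : ℝ) T, ∀ x ∈ Icc (0 : ℝ) L,
    pt v t x + px η t x + px (px (px η)) t x = 0)

/-- `(θ, u)` is a classical solution of the homogeneous linearized KdV–KdV system on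
`[0,T] × [0,L]`: a regular solution with the homogeneous boundary conditions
`θ(t,0) = θ(t,L) = θ_x(t,0) = 0`, `u(t,0) = u(t,L) = u_x(t,L) = 0`. -/
def IsClassicalSolution (L T : ℝ) (θ u : ℝ → ℝ → ℝ) : Prop :=
  IsRegularSolution L T θ u ∧
  (∀ t ∈ Icc (0 : ℝ) T, θ t 0 = 0 ∧ θ t L = 0 ∧ px θ t 0 = 0) ∧
  (∀ t ∈ Icc (0 : ℝ) T, u t 0 = 0 ∧ u t L = 0 ∧ px u t L = 0)

lemma px_hasDerivAt (f : ℝ → ℝ → ℝ) (t : ℝ) (hf : ContDiff ℝ 3 (f t)) (x : ℝ) :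
    HasDerivAt (f t) (px f t x) x ∧ HasDerivAt (px f t) (px (px f) t x) x ∧
    HasDerivAt (px (px f) t) (px (px (px f)) t x) x := by
  have h1 : ContDiff ℝ 2 (px f t) := ((contDiff_succ_iff_deriv (n := 2)).1 hf).2.2
  have h2 : ContDiff ℝ 1 (px (px f) t) := ((contDiff_succ_iff_deriv (n := 1)).1 h1).2.2
  exact ⟨(hf.differentiable (by norm_num) x).hasDerivAt,
    (h1.differentiable (by norm_num) x).hasDerivAt,
    (h2.differentiable (by norm_num) x).hasDerivAt⟩

/-- The duality identity between a regular solution `(η, v)` with boundary traces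
`h₀, h₁, h₂, g₀, g₁, g₂` and a classical solution `(θ, u)` of the homogeneous system. -/
theorem statement_17 (L T S : ℝ) (hL : 0 < L) (hT : 0 < T) (hS : S ∈ Icc (0 : ℝ) T)
    (η v : ℝ → ℝ → ℝ) (hηv : IsRegularSolution L T η v)
    (h₀ h₁ h₂ g₀ g₁ g₂ : ℝ → ℝ)
    (htr : ∀ t ∈ Icc (0 : ℝ) T,
      η t 0 = h₀ t ∧ η t L = h₁ t ∧ px η t 0 = h₂ t ∧
      v t 0 = g₀ t ∧ v t L = g₁ t ∧ px v t L = g₂ t)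
    (θ u : ℝ → ℝ → ℝ) (hθu : IsClassicalSolution L T θ u) :
    (∫ x in (0:ℝ)..L, (η S x * θ S x + v S x * u S x))
      - (∫ x in (0:ℝ)..L, (η 0 x * θ 0 x + v 0 x * u 0 x))
    = ∫ t in (0:ℝ)..S,
        (px θ t L * g₂ t - px (px θ) t L * g₁ t + px (px θ) t 0 * g₀ t
          - px u t 0 * h₂ t - px (px u) t L * h₁ t + px (px u) t 0 * h₀ t) := by
  obtain ⟨⟨a1, a2, a3, a4, a5, a6, a7, a8, -, -, -, -, -, -, a9, a10⟩, hb, hb'⟩ := hθu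
  obtain ⟨b1, b2, b3, b4, b5, b6, b7, b8, -, -, -, -, -, -, b9, b10⟩ := hηv
  obtain ⟨hS0, hST⟩ := hS
  -- the time derivative of the density
  let F : ℝ → ℝ → ℝ := fun t x =>
    pt η t x * θ t x + η t x * pt θ t x + (pt v t x * u t x + v t x * pt u t x)
  have hFc : ContinuousOn F.uncurry (Icc 0 T ×ˢ Icc 0 L) :=
    ((b7.mul a5).add (b5.mul a7)).add ((b8.mul a6).add (b6.mul a8))
  have hFt : ∀ x ∈ Icc 0 L, ContinuousOn (fun t => F t x) (Icc 0 T) := fun x hx =>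
    hFc.comp (f := fun t => (t, x)) (by fun_prop) (fun t ht => ⟨ht, hx⟩)
  have hFx : ∀ t ∈ Icc 0 T, ContinuousOn (fun x => F t x) (Icc 0 L) := fun t ht =>
    hFc.comp (f := fun x => (t, x)) (by fun_prop) (fun x hx => ⟨ht, hx⟩)
  have hI : ∀ t, IntervalIntegrable (fun x => η t x * θ t x + v t x * u t x) volume 0 L := by
    intro t
    apply Continuous.intervalIntegrable
    exact ((b3 t).continuous.mul (a3 t).continuous).add ((b4 t).continuous.mul (a4 t).continuous)
  rw [← intervalIntegral.integral_sub (hI S) (hI 0)]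
  have e1 : ∫ x in (0:ℝ)..L, ((η S x * θ S x + v S x * u S x) - (η 0 x * θ 0 x + v 0 x * u 0 x))
      = ∫ x in (0:ℝ)..L, ∫ t in (0:ℝ)..S, F t x := by
    apply intervalIntegral.integral_congr
    intro x hx
    rw [uIcc_of_le hL.le] at hx
    symm
    refine intervalIntegral.integral_eq_sub_of_hasDerivAt
      (f := fun t => η t x * θ t x + v t x * u t x) ?_ ?_
    · intro t _
      exact ((b1 x t).hasDerivAt.mul (a1 x t).hasDerivAt).add
        ((b2 x t).hasDerivAt.mul (a2 x t).hasDerivAt)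
    · apply ContinuousOn.intervalIntegrable
      rw [uIcc_of_le hS0]
      exact (hFt x hx).mono (Icc_subset_Icc_right hST)
  rw [e1, ← intervalIntegral_intervalIntegral_swap]
  swap
  · rw [uIoc_of_le hS0, uIoc_of_le hL.le]
    refine (hFc.integrableOn_compact (isCompact_Icc.prod isCompact_Icc)).mono_set ?_
    exact prod_mono (Ioc_subset_Icc_self.trans (Icc_subset_Icc_right hST)) Ioc_subset_Icc_self
  apply intervalIntegral.integral_congr
  intro t ht
  rw [uIcc_of_le hS0] at ht
  have ht' : t ∈ Icc 0 T := ⟨ht.1, ht.2.trans hST⟩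
  obtain ⟨c1, c2, c3, c4, c5, c6⟩ := htr t ht'
  obtain ⟨d1, d2, d3⟩ := hb t ht'
  obtain ⟨d4, d5, d6⟩ := hb' t ht'
  let G : ℝ → ℝ := fun x => -(v t x * θ t x + η t x * u t x
    + (px (px v) t x * θ t x - px v t x * px θ t x + v t x * px (px θ) t x)
    + (η t x * px (px u) t x - px η t x * px u t x + px (px η) t x * u t x))
  have hG : ∫ x in (0:ℝ)..L, F t x = G L - G 0 := by
    refine intervalIntegral.integral_eq_sub_of_hasDerivAt (f := G) ?_ ?_
    · intro x hx
      rw [uIcc_of_le hL.le] at hx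
      obtain ⟨p1, p2, p3⟩ := px_hasDerivAt η t (b3 t) x
      obtain ⟨q1, q2, q3⟩ := px_hasDerivAt v t (b4 t) x
      obtain ⟨r1, r2, r3⟩ := px_hasDerivAt θ t (a3 t) x
      obtain ⟨s1, s2, s3⟩ := px_hasDerivAt u t (a4 t) x
      have key := ((((q1.mul r1).add (p1.mul s1)).add
        (((q3.mul r1).sub (q2.mul r2)).add (q1.mul r3))).add
        (((p1.mul s3).sub (p2.mul s2)).add (p3.mul s1))).neg
      refine HasDerivAt.congr_deriv (f := G) key ?_
      have w1 := a9 t ht' x hx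
      have w2 := a10 t ht' x hx
      have w3 := b9 t ht' x hx
      have w4 := b10 t ht' x hx
      simp only [F]
      linear_combination (-θ t x) * w3 - η t x * w1 - u t x * w4 - v t x * w2
    · apply ContinuousOn.intervalIntegrable
      rw [uIcc_of_le hL.le]
      exact hFx t ht'
  simp only [hG, G]
  rw [← c1, ← c2, ← c3, ← c4, ← c5, ← c6, d1, d2, d3, d4, d5, d6]
  ring
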